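/- arXiv:1609.02577 — 2 statements merged into one kernel-verified Lean document; each statement's English description precedes it below -/
import Mathlib

section
/- Let V be a set and ℌ a halfspace system on V. Let (s_m)_{m∈ℕ} be a strictly descending chain in ℌ that is pairwise strongly separated, and let (h_n)_{n∈ℕ} be a strictly descending chain in ℌ such that h_n ∩ s_m ≠ ∅ for all n and m. Then for every m there exists N such that h_n ⊆ s_m for all n ≥ N; in particular ⋂_{n∈ℕ} h_n ⊆ ⋂_{m∈ℕ} s_m. -/
/-!
Let `t ⊆ s` be strongly separated. A halfspace `h` that meets `t`, is not contained in `s` and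
together with `s` does not cover the space contains `t`: otherwise it would be transverse to both.
By interval-finiteness no infinite strictly descending chain of halfspaces is bounded below by a
halfspace. Hence `s i` fails to contain `(h 0)ᶜ` for large `i`, and for each such `i` some `h N`
fails to contain `s (i + 1)`. This leaves only `h N ⊆ s i`.
-/

/-- Two subsets `h, k` of `V` are transverse if the four "corners" are all nonempty. -/
def Transverse {V : Type*} (h k : Set V) : Prop :=
  (h ∩ k).Nonempty ∧ (h ∩ kᶜ).Nonempty ∧ (hᶜ ∩ k).Nonempty ∧ (hᶜ ∩ kᶜ).Nonempty

/-- A halfspace system on `V`: a family of subsets closed under complementation and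
interval-finite. -/
structure HalfspaceSystem (V : Type*) where
  carrier : Set (Set V)
  compl_mem : ∀ h ∈ carrier, hᶜ ∈ carrier
  intervalFinite : ∀ h ∈ carrier, ∀ k ∈ carrier, h ⊆ k →
    {m ∈ carrier | h ⊆ m ∧ m ⊆ k}.Finite

/-- Two halfspaces are strongly separated if no member of the system is transverse to both. -/
def StronglySeparated {V : Type*} (ℌ : HalfspaceSystem V) (h k : Set V) : Prop :=
  ∀ m ∈ ℌ.carrier, ¬(Transverse m h ∧ Transverse m k)

theorem transverse_iff {V : Type*} {h k : Set V} :
    Transverse h k ↔ (h ∩ k).Nonempty ∧ ¬h ⊆ k ∧ ¬k ⊆ h ∧ ¬hᶜ ⊆ k := by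
  simp only [Transverse, Set.inter_compl_nonempty_iff, Set.inter_comm hᶜ k]

theorem StronglySeparated.subset_of_inter_nonempty {V : Type*} {ℌ : HalfspaceSystem V}
    {s t h : Set V} (hst : StronglySeparated ℌ s t) (hts : t ⊆ s) (hh : h ∈ ℌ.carrier)
    (hne : (h ∩ t).Nonempty) (hs : ¬h ⊆ s) (hcs : ¬hᶜ ⊆ s) : t ⊆ h := by
  by_contra hth
  have transverse_s : Transverse h s :=
    transverse_iff.2 ⟨hne.mono (Set.inter_subset_inter_right h hts), hs,
      fun hsh => hth (hts.trans hsh), hcs⟩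
  have transverse_t : Transverse h t :=
    transverse_iff.2 ⟨hne, fun hht => hs (hht.trans hts), hth, fun hct => hcs (hct.trans hts)⟩
  exact hst h hh ⟨transverse_s, transverse_t⟩

theorem HalfspaceSystem.exists_not_subset_of_strictAnti {V : Type*} (ℌ : HalfspaceSystem V)
    {c : ℕ → Set V} (hc : ∀ n, c n ∈ ℌ.carrier) (hanti : StrictAnti c)
    {a : Set V} (ha : a ∈ ℌ.carrier) : ∃ n, ¬a ⊆ c n := by
  by_contra! hac
  have interval_finite : {b ∈ ℌ.carrier | a ⊆ b ∧ b ⊆ c 0}.Finite :=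
    ℌ.intervalFinite a ha (c 0) (hc 0) (hac 0)
  have mem_interval (n : ℕ) : c n ∈ {b ∈ ℌ.carrier | a ⊆ b ∧ b ⊆ c 0} :=
    ⟨hc n, hac n, hanti.antitone n.zero_le⟩
  exact Set.infinite_of_injective_forall_mem hanti.injective mem_interval interval_finite

theorem StronglySeparated.exists_subset_of_strictAnti {V : Type*} {ℌ : HalfspaceSystem V}
    {s t : Set V} (hst : StronglySeparated ℌ s t) (hts : t ⊆ s) (ht : t ∈ ℌ.carrier)
    {h : ℕ → Set V} (hmem : ∀ n, h n ∈ ℌ.carrier) (hanti : StrictAnti h)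
    (hne : ∀ n, (h n ∩ t).Nonempty) (hcs : ¬(h 0)ᶜ ⊆ s) : ∃ N, h N ⊆ s := by
  obtain ⟨N, hN⟩ := ℌ.exists_not_subset_of_strictAnti hmem hanti ht
  have not_cover : ¬(h N)ᶜ ⊆ s := fun hcover =>
    hcs ((Set.compl_subset_compl.2 (hanti.antitone N.zero_le)).trans hcover)
  refine ⟨N, ?_⟩
  by_contra hNs
  exact hN (hst.subset_of_inter_nonempty hts (hmem N) (hne N) hNs not_cover)

/-- if `(sₘ)` is a strictly descending pairwise strongly separated chain and
`(hₙ)` is a strictly descending chain with `hₙ ∩ sₘ ≠ ∅` for all `n, m`, then for every `m`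
the chain `(hₙ)` is eventually contained in `sₘ`; in particular `⋂ₙ hₙ ⊆ ⋂ₘ sₘ`. -/
theorem descending_chain_absorbed
    {V : Type*} (ℌ : HalfspaceSystem V)
    (s : ℕ → Set V) (hsmem : ∀ m, s m ∈ ℌ.carrier) (hsdesc : ∀ m, s (m + 1) ⊂ s m)
    (hss : ∀ i j, i ≠ j → StronglySeparated ℌ (s i) (s j))
    (h : ℕ → Set V) (hhmem : ∀ n, h n ∈ ℌ.carrier) (hhdesc : ∀ n, h (n + 1) ⊂ h n)
    (hne : ∀ n m, (h n ∩ s m).Nonempty) :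
    (∀ m, ∃ N, ∀ n ≥ N, h n ⊆ s m) ∧ (⋂ n, h n) ⊆ ⋂ m, s m := by
  have hs : StrictAnti s := strictAnti_nat_of_succ_lt hsdesc
  have hh : StrictAnti h := strictAnti_nat_of_succ_lt hhdesc
  have absorbed : ∀ m, ∃ N, ∀ n ≥ N, h n ⊆ s m := by
    intro m
    obtain ⟨k, hk⟩ := ℌ.exists_not_subset_of_strictAnti hsmem hs (ℌ.compl_mem _ (hhmem 0))
    let i := max k m
    have not_cover : ¬(h 0)ᶜ ⊆ s i := fun hcover =>
      hk (hcover.trans (hs.antitone (le_max_left k m)))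
    obtain ⟨N, hN⟩ := (hss i (i + 1) i.succ_ne_self.symm).exists_subset_of_strictAnti
      (hsdesc i).subset (hsmem (i + 1)) hhmem hh (fun n => hne n (i + 1)) not_cover
    have subset_m : h N ⊆ s m := hN.trans (hs.antitone (le_max_right k m))
    exact ⟨N, fun n hn => (hh.antitone hn).trans subset_m⟩
  refine ⟨absorbed, Set.subset_iInter fun m => ?_⟩
  obtain ⟨N, hN⟩ := absorbed m
  exact (Set.iInter_subset h N).trans (hN N le_rfl)
end

section
/- Let V be a set and ℌ a halfspace system on V. Let (a_n)_{n∈ℕ} and (b_n)_{n∈ℕ} be strictly descending chains in ℌ, each pairwise strongly separated, and suppose there exists h ∈ ℌ such that a_n ∩ h ≠ ∅ and b_n ∩ (V \ h) ≠ ∅ for all n. Then there exists a bi-infinite sequence (s_n)_{n∈ℤ} in ℌ with s_{n+1} ⊊ s_n for all n ∈ ℤ, pairwise strongly separated, such that for n ≥ 0 the set s_n is a term of the chain (a_m) and satisfies s_n ⊆ h, and for n < 0 the set s_n is the complement of a term of the chain (b_m) and satisfies h ⊆ s_n. -/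
open Filter

section

variable {V ι α : Type*} {ℌ : HalfspaceSystem V} {h h' k k' m : Set V}

theorem transverse_iff_not_subset :
    Transverse h k ↔ (h ∩ k).Nonempty ∧ ¬ h ⊆ k ∧ ¬ k ⊆ h ∧ ¬ hᶜ ⊆ k := by
  rw [Transverse, Set.inter_compl_nonempty_iff, Set.inter_comm hᶜ k,
    Set.inter_compl_nonempty_iff, Set.inter_compl_nonempty_iff]

theorem transverse_compl_right_iff : Transverse m kᶜ ↔ Transverse m k := by
  simp only [Transverse, compl_compl]
  tauto

theorem Transverse.of_subset_of_subset (hmh : Transverse m h) (hmk : Transverse m k)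
    (hhh' : h ⊆ h') (hh'k : h' ⊆ k) : Transverse m h' :=
  have ⟨inter_h, _, compl_inter_h, _⟩ := hmh
  have ⟨_, inter_compl_k, _, compl_inter_compl_k⟩ := hmk
  ⟨inter_h.mono (by gcongr), inter_compl_k.mono (by gcongr),
    compl_inter_h.mono (by gcongr), compl_inter_compl_k.mono (by gcongr)⟩

namespace StronglySeparated

protected theorem symm (hs : StronglySeparated ℌ h k) : StronglySeparated ℌ k h :=
  fun m hm hmkh => hs m hm hmkh.symm

theorem compl (hs : StronglySeparated ℌ h k) : StronglySeparated ℌ hᶜ kᶜ := by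
  simpa only [StronglySeparated, transverse_compl_right_iff] using hs

theorem of_nested (hs : StronglySeparated ℌ h k) (hh : h' ⊆ h) (hhk : h ⊆ k) (hk : k ⊆ k') :
    StronglySeparated ℌ h' k' := fun m hm ⟨hmh', hmk'⟩ =>
  hs m hm ⟨hmh'.of_subset_of_subset hmk' hh (hhk.trans hk),
    hmh'.of_subset_of_subset hmk' (hh.trans hhk) hk⟩

theorem pairwise_of_succ [LinearOrder ι] [Add ι] [One ι] [SuccAddOrder ι]
    {s : ι → Set V} (hs : Antitone s)
    (hsep : ∀ i, ¬ IsMax i → StronglySeparated ℌ (s (i + 1)) (s i)) :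
    Pairwise fun i j => StronglySeparated ℌ (s i) (s j) := by
  have of_lt {i j : ι} (hij : i < j) : StronglySeparated ℌ (s j) (s i) :=
    (hsep i hij.not_isMax).of_nested (hs (Order.add_one_le_of_lt hij))
      (hs (Order.wcovBy_add_one i).le) subset_rfl
  intro i j hij
  obtain hij | hji := hij.lt_or_gt
  · exact (of_lt hij).symm
  · exact of_lt hji

end StronglySeparated

namespace HalfspaceSystem

variable {a : ι → Set V}

theorem eventually_cofinite_not_subset (hk : k ∈ ℌ.carrier) (hk' : k' ∈ ℌ.carrier)
    (ha : ∀ i, a i ∈ ℌ.carrier) (ha_inj : a.Injective) (hak' : ∀ i, a i ⊆ k') :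
    ∀ᶠ i in cofinite, ¬ k ⊆ a i := by
  suffices {i | k ⊆ a i}.Finite from this.eventually_cofinite_notMem
  obtain hempty | ⟨i, hi⟩ := {i | k ⊆ a i}.eq_empty_or_nonempty
  · exact hempty ▸ Set.finite_empty
  · have hkk' : k ⊆ k' := hi.trans (hak' i)
    exact ((ℌ.intervalFinite k hk k' hk' hkk').preimage ha_inj.injOn).subset
      fun j hj => ⟨ha j, hj, hak' j⟩

theorem subsingleton_setOf_transverse (hh : h ∈ ℌ.carrier)
    (hsep : Pairwise fun i j => StronglySeparated ℌ (a i) (a j)) :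
    {i | Transverse h (a i)}.Subsingleton := fun _ hi _ hj =>
  by_contra fun hij => hsep hij h hh ⟨hi, hj⟩

theorem eventually_cofinite_subset (hh : h ∈ ℌ.carrier) (hk : k ∈ ℌ.carrier)
    (ha : ∀ i, a i ∈ ℌ.carrier) (ha_inj : a.Injective) (hak : ∀ i, a i ⊆ k)
    (hsep : Pairwise fun i j => StronglySeparated ℌ (a i) (a j))
    (hah : ∀ i, (a i ∩ h).Nonempty) : ∀ᶠ i in cofinite, a i ⊆ h := by
  have not_transverse : ∀ᶠ i in cofinite, ¬ Transverse h (a i) :=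
    (subsingleton_setOf_transverse hh hsep).finite.eventually_cofinite_notMem
  filter_upwards [not_transverse, eventually_cofinite_not_subset hh hk ha ha_inj hak,
    eventually_cofinite_not_subset (ℌ.compl_mem h hh) hk ha ha_inj hak]
    with i hi hha hhca
  by_contra hai
  exact hi (transverse_iff_not_subset.2 ⟨Set.inter_comm h (a i) ▸ hah i, hha, hai, hhca⟩)

theorem eventually_atTop_subset (ℌ : HalfspaceSystem V) {a : ℕ → Set V} (hh : h ∈ ℌ.carrier)
    (ha : ∀ n, a n ∈ ℌ.carrier) (ha_anti : StrictAnti a)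
    (hsep : Pairwise fun i j => StronglySeparated ℌ (a i) (a j))
    (hah : ∀ n, (a n ∩ h).Nonempty) : ∀ᶠ n in atTop, a n ⊆ h :=
  Nat.cofinite_eq_atTop ▸ eventually_cofinite_subset hh (ha 0) ha ha_anti.injective
    (fun n => ha_anti.antitone n.zero_le) hsep hah

end HalfspaceSystem

/-- The bi-infinite sequence `…, c 1, c 0, a 0, a 1, …`, with `a 0` at index `0` and `c 0` at
index `-1`. -/
def biinfiniteSeq (a c : ℕ → α) : ℤ → α
  | .ofNat n => a n
  | .negSucc n => c n

theorem biinfiniteSeq_rel_succ {r : α → α → Prop} {a c : ℕ → α} (ha : ∀ n, r (a (n + 1)) (a n))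
    (hac : r (a 0) (c 0)) (hc : ∀ n, r (c n) (c (n + 1))) :
    ∀ n : ℤ, r (biinfiniteSeq a c (n + 1)) (biinfiniteSeq a c n)
  | .ofNat n => ha n
  | .negSucc 0 => hac
  | .negSucc (n + 1) => hc n

end

/-- from two pairwise strongly separated descending chains `(aₙ)` and `(bₙ)`,
separated by a halfspace `h` (with `aₙ ∩ h ≠ ∅` and `bₙ ∩ hᶜ ≠ ∅`), one can build a
bi-infinite strictly descending pairwise strongly separated chain `(sₙ)_{n ∈ ℤ}` with
`sₙ` a term of `(aₘ)` contained in `h` for `n ≥ 0`, and `sₙ` the complement of a term of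
`(bₘ)` containing `h` for `n < 0`. -/
theorem biinfinite_chain_exists
    {V : Type*} (ℌ : HalfspaceSystem V)
    (a : ℕ → Set V) (hamem : ∀ n, a n ∈ ℌ.carrier) (hadesc : ∀ n, a (n + 1) ⊂ a n)
    (hass : ∀ i j, i ≠ j → StronglySeparated ℌ (a i) (a j))
    (b : ℕ → Set V) (hbmem : ∀ n, b n ∈ ℌ.carrier) (hbdesc : ∀ n, b (n + 1) ⊂ b n)
    (hbss : ∀ i j, i ≠ j → StronglySeparated ℌ (b i) (b j))
    (h : Set V) (hh : h ∈ ℌ.carrier)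
    (hha : ∀ n, (a n ∩ h).Nonempty) (hhb : ∀ n, (b n ∩ hᶜ).Nonempty) :
    ∃ s : ℤ → Set V,
      (∀ n, s n ∈ ℌ.carrier) ∧
      (∀ n : ℤ, s (n + 1) ⊂ s n) ∧
      (∀ i j : ℤ, i ≠ j → StronglySeparated ℌ (s i) (s j)) ∧
      (∀ n : ℤ, 0 ≤ n → (∃ m : ℕ, s n = a m) ∧ s n ⊆ h) ∧
      (∀ n : ℤ, n < 0 → (∃ m : ℕ, s n = (b m)ᶜ) ∧ h ⊆ s n) := by
  have ha : StrictAnti a := strictAnti_nat_of_succ_lt hadesc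
  have hb : StrictAnti b := strictAnti_nat_of_succ_lt hbdesc
  obtain ⟨N, hN⟩ := eventually_atTop.1 (ℌ.eventually_atTop_subset hh hamem ha hass hha)
  obtain ⟨M, hM⟩ := eventually_atTop.1
    (ℌ.eventually_atTop_subset (ℌ.compl_mem h hh) hbmem hb hbss hhb)
  have hbM (n : ℕ) : h ⊆ (b (M + n))ᶜ := Set.subset_compl_comm.1 (hM _ (by lia))
  have ha_sub_b : a N ⊆ (b M)ᶜ := (hN N le_rfl).trans (hbM 0)
  let s := biinfiniteSeq (fun n => a (N + 1 + n)) (fun n => (b (M + n))ᶜ)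
  have hs : ∀ n, s (n + 1) ⊂ s n :=
    biinfiniteSeq_rel_succ (fun _ => hadesc _) ((hadesc N).trans_subset ha_sub_b)
      (fun _ => compl_lt_compl_iff_lt.2 (hbdesc _))
  have hsep : ∀ n, StronglySeparated ℌ (s (n + 1)) (s n) :=
    biinfiniteSeq_rel_succ (fun _ => hass _ _ (by lia))
      ((hass (N + 1) N (by lia)).of_nested subset_rfl (hadesc N).subset ha_sub_b)
      (fun _ => (hbss _ _ (by lia)).compl)
  refine ⟨s, ?_, hs, fun i j hij => StronglySeparated.pairwise_of_succ
    (strictAnti_int_of_succ_lt hs).antitone (fun n _ => hsep n) hij, ?_, ?_⟩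
  · rintro (n | n)
    exacts [hamem _, ℌ.compl_mem _ (hbmem _)]
  · rintro (n | n) hn
    exacts [⟨⟨_, rfl⟩, hN _ (by lia)⟩, absurd hn (by simp)]
  · rintro (n | n) hn
    exacts [absurd hn (by simp), ⟨⟨_, rfl⟩, hbM n⟩]
end
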